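/- arXiv:2503.13132 — 3 statements merged into one kernel-verified Lean document; each statement's English description precedes it below -/
import Mathlib

section
/- Assume conditions (a) and (b), let Q_{1,k}^{(d)} := Σ_{1≤l≠k'≤k} ⟨X_l^{(d)}, X_{k'}^{(d)}⟩, and let N ∈ ℕ with N ≥ 1 and λ > 0. Then P( max_{1≤k≤N} |Q_{1,k}^{(d)}| ≥ λ ) ≤ λ^{-2} E(Q_{1,N}^{(d)})² ≤ 2 λ^{-2} N(N−1) max_{1≤j≤d} E(X_{1,j}^{(d)})². -/
open MeasureTheory
open scoped RealInnerProductSpace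

/-! With `S_k = X_1 + ⋯ + X_k`, the increments are `Q_{k+1} - Q_k = 2⟪S_k, X_{k+1}⟫`. Since
`X_{k+1}` is centred and independent of the past, `Q` is a square-integrable martingale, and the
first inequality is Doob's maximal inequality for the submartingale `Q ^ 2`.

Martingale increments are orthogonal, so `E Q_N ^ 2 = 4 ∑_{k < N} E ⟪S_k, X_{k+1}⟫ ^ 2`. If
`E ⟪x, X_i⟫ ^ 2 ≤ σ ‖x‖ ^ 2` for all `x`, integrating first over `X_{k+1}` with `S_k` fixed bounds
the `k`-th term by `σ E ‖S_k‖ ^ 2 = σ k`, and the sum is `2 N (N - 1) σ`. For uncorrelated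
coordinates the covariance is diagonal and `σ` can be taken to be its largest entry. -/

section Martingale

variable {Ω : Type*} {m mΩ : MeasurableSpace Ω} {μ : Measure Ω}

theorem condExp_bilin_ae_eq_zero {E F G : Type*}
    [NormedAddCommGroup E] [NormedSpace ℝ E] [NormedAddCommGroup F] [NormedSpace ℝ F]
    [CompleteSpace F] [NormedAddCommGroup G] [NormedSpace ℝ G] [CompleteSpace G]
    (B : E →L[ℝ] F →L[ℝ] G) {f : Ω → E} {g : Ω → F} (hf : StronglyMeasurable[m] f)
    (hfg : Integrable (fun ω => B (f ω) (g ω)) μ) (hg : Integrable g μ)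
    (hg0 : μ[g | m] =ᵐ[μ] 0) :
    μ[fun ω => B (f ω) (g ω) | m] =ᵐ[μ] 0 := by
  filter_upwards [condExp_bilin_of_stronglyMeasurable_left B hf hfg hg, hg0] with ω hB h0
  rw [hB, h0, Pi.zero_apply, map_zero, Pi.zero_apply]

variable {ℱ : Filtration ℕ mΩ} {f : ℕ → Ω → ℝ} [IsFiniteMeasure μ]

theorem integral_mul_sub_eq_zero_of_martingale (hf : Martingale f ℱ μ)
    (hL2 : ∀ n, MemLp (f n) 2 μ) (n : ℕ) :
    ∫ ω, f n ω * (f (n + 1) ω - f n ω) ∂μ = 0 := by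
  have hincr : μ[f (n + 1) - f n | ℱ n] =ᵐ[μ] 0 := by
    filter_upwards [condExp_sub (hf.integrable (n + 1)) (hf.integrable n) (ℱ n),
      hf.condExp_ae_eq n.le_succ, hf.condExp_ae_eq le_rfl] with ω hsub hsucc hself
    rw [hsub, Pi.sub_apply, hsucc, hself, sub_self, Pi.zero_apply]
  rw [← integral_condExp (ℱ.le n)]
  exact integral_eq_zero_of_ae <| condExp_bilin_ae_eq_zero (.mul ℝ ℝ) (hf.stronglyMeasurable n)
    ((hL2 n).integrable_mul ((hL2 (n + 1)).sub (hL2 n)))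
    ((hf.integrable (n + 1)).sub (hf.integrable n)) hincr

theorem integral_sq_succ_of_martingale (hf : Martingale f ℱ μ)
    (hL2 : ∀ n, MemLp (f n) 2 μ) (n : ℕ) :
    ∫ ω, f (n + 1) ω ^ 2 ∂μ = ∫ ω, f n ω ^ 2 ∂μ + ∫ ω, (f (n + 1) ω - f n ω) ^ 2 ∂μ := by
  have hΔ : MemLp (fun ω => f (n + 1) ω - f n ω) 2 μ := (hL2 (n + 1)).sub (hL2 n)
  have hdiag : Integrable (fun ω => f n ω ^ 2 + (f (n + 1) ω - f n ω) ^ 2) μ :=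
    (hL2 n).integrable_sq.add hΔ.integrable_sq
  have hcross : Integrable (fun ω => f n ω * (f (n + 1) ω - f n ω)) μ := (hL2 n).integrable_mul hΔ
  calc ∫ ω, f (n + 1) ω ^ 2 ∂μ
      = ∫ ω, (f n ω ^ 2 + (f (n + 1) ω - f n ω) ^ 2
          + 2 * (f n ω * (f (n + 1) ω - f n ω))) ∂μ := by congr with ω; ring
    _ = _ := by
      rw [integral_add hdiag (hcross.const_mul 2),
        integral_add (hL2 n).integrable_sq hΔ.integrable_sq, integral_const_mul,
        integral_mul_sub_eq_zero_of_martingale hf hL2, mul_zero, add_zero]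

theorem submartingale_sq_of_martingale (hf : Martingale f ℱ μ) (hL2 : ∀ n, MemLp (f n) 2 μ) :
    Submartingale (fun n ω => f n ω ^ 2) ℱ μ := by
  refine submartingale_nat (fun n => (hf.stronglyMeasurable n).pow 2)
    (fun n => (hL2 n).integrable_sq) fun n => ?_
  filter_upwards [hf.condExp_ae_eq n.le_succ, (even_two.convexOn_pow (𝕜 := ℝ)).map_condExp_le_univ
    (ℱ.le n) (continuous_pow 2).lowerSemicontinuous (hf.integrable (n + 1))
    (hL2 (n + 1)).integrable_sq] with ω hcond hjensen
  rw [Function.comp_apply, hcond] at hjensen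
  exact hjensen

theorem measureReal_le_sup'_abs_le_of_martingale (hf : Martingale f ℱ μ)
    (hL2 : ∀ n, MemLp (f n) 2 μ) {N : ℕ} {s : Finset ℕ} (hs : s.Nonempty)
    (hsN : ∀ k ∈ s, k ≤ N) {r : ℝ} (hr : 0 < r) :
    μ.real {ω | r ≤ s.sup' hs fun k => |f k ω|} ≤ (r ^ 2)⁻¹ * ∫ ω, f N ω ^ 2 ∂μ := by
  set ε : NNReal := ⟨r ^ 2, sq_nonneg r⟩
  set A : Set Ω := {ω | (ε : ℝ) ≤
    (Finset.range (N + 1)).sup' Finset.nonempty_range_add_one fun k => f k ω ^ 2}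
  have hsub : {ω | r ≤ s.sup' hs fun k => |f k ω|} ⊆ A := by
    intro ω hω
    rw [Set.mem_ofPred_eq, Finset.le_sup'_iff] at hω ⊢
    obtain ⟨k, hk, hrk⟩ := hω
    refine ⟨k, Finset.mem_range_succ_iff.2 (hsN k hk), ?_⟩
    exact (pow_le_pow_left₀ hr.le hrk 2).trans_eq (sq_abs _)
  have hdoob : r ^ 2 * μ.real A ≤ ∫ ω in A, f N ω ^ 2 ∂μ := by
    have h := ENNReal.toReal_mono ENNReal.ofReal_ne_top <|
      maximal_ineq (submartingale_sq_of_martingale hf hL2) (fun k ω => sq_nonneg (f k ω))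
        (ε := ε) N
    rwa [ENNReal.toReal_mul, ENNReal.toReal_ofReal (integral_nonneg fun ω => sq_nonneg _)] at h
  rw [le_inv_mul_iff₀ (pow_pos hr 2)]
  calc r ^ 2 * μ.real {ω | r ≤ s.sup' hs fun k => |f k ω|}
      ≤ r ^ 2 * μ.real A := by gcongr; exact measure_ne_top μ A
    _ ≤ ∫ ω in A, f N ω ^ 2 ∂μ := hdoob
    _ ≤ ∫ ω, f N ω ^ 2 ∂μ :=
      setIntegral_le_integral (hL2 N).integrable_sq (ae_of_all _ fun ω => sq_nonneg _)

end Martingale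

open ProbabilityTheory

section PartialSums

variable {E Ω : Type*} [NormedAddCommGroup E] [MeasurableSpace E] [BorelSpace E]
  [MeasurableSpace Ω] {P : Measure Ω} {X : ℕ → Ω → E}

theorem stronglyMeasurable_natural_sum_Icc (hX : ∀ i, StronglyMeasurable (X i)) (k : ℕ) :
    StronglyMeasurable[Filtration.natural X hX k] fun ω => ∑ i ∈ Finset.Icc 1 k, X i ω :=
  Finset.stronglyMeasurable_fun_sum _ fun _ hi =>
    (Filtration.stronglyAdapted_natural hX).stronglyMeasurable_le (Finset.mem_Icc.1 hi).2

theorem indepFun_sum_Icc_succ [SecondCountableTopology E] (hmeas : ∀ i, Measurable (X i))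
    (hindep : iIndepFun X P) (k : ℕ) :
    (fun ω => ∑ i ∈ Finset.Icc 1 k, X i ω) ⟂ᵢ[P] X (k + 1) := by
  simpa only [Finset.sum_fn] using hindep.indepFun_finsetSum_of_notMem hmeas (by simp)

end PartialSums

section IndependentPair

variable {H Ω : Type*} [NormedAddCommGroup H] [InnerProductSpace ℝ H] [MeasurableSpace H]
  [BorelSpace H] [MeasurableSpace Ω] {P : Measure Ω} {X Y : Ω → H}

theorem memLp_two_inner_of_indepFun (hXY : X ⟂ᵢ[P] Y) (hX : MemLp X 2 P)
    (hY : MemLp Y 2 P) : MemLp (fun ω => ⟪X ω, Y ω⟫) 2 P := by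
  have hmeas : AEStronglyMeasurable (fun ω => ⟪X ω, Y ω⟫) P :=
    hX.aestronglyMeasurable.inner hY.aestronglyMeasurable
  have hprod : Integrable (fun ω => ‖X ω‖ ^ 2 * ‖Y ω‖ ^ 2) P :=
    (hXY.comp (measurable_norm.pow_const 2) (measurable_norm.pow_const 2)).integrable_mul
      hX.norm.integrable_sq hY.norm.integrable_sq
  refine (memLp_two_iff_integrable_sq hmeas).2 (hprod.mono' (hmeas.pow 2) (ae_of_all _ fun ω => ?_))
  rw [norm_pow, ← mul_pow]
  exact pow_le_pow_left₀ (norm_nonneg _) (norm_inner_le_norm _ _) 2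

theorem integral_inner_sq_le_of_indepFun [SecondCountableTopology H] [IsFiniteMeasure P]
    (hXY : X ⟂ᵢ[P] Y) (hX : MemLp X 2 P) (hY : MemLp Y 2 P) {σ : ℝ}
    (hσ : ∀ x : H, ∫ ω, ⟪x, Y ω⟫ ^ 2 ∂P ≤ σ * ‖x‖ ^ 2) :
    ∫ ω, ⟪X ω, Y ω⟫ ^ 2 ∂P ≤ σ * ∫ ω, ‖X ω‖ ^ 2 ∂P := by
  have hXm : AEMeasurable X P := hX.aestronglyMeasurable.aemeasurable
  have hYm : AEMeasurable Y P := hY.aestronglyMeasurable.aemeasurable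
  have hcont : Continuous fun z : H × H => ⟪z.1, z.2⟫ ^ 2 := by fun_prop
  have hlaw : P.map (fun ω => (X ω, Y ω)) = (P.map X).prod (P.map Y) :=
    hXY.map_prod_eq_prod_map_map hXm hYm
  have hint : Integrable (fun z : H × H => ⟪z.1, z.2⟫ ^ 2) ((P.map X).prod (P.map Y)) := by
    rw [← hlaw, integrable_map_measure hcont.aestronglyMeasurable (hXm.prodMk hYm)]
    exact (memLp_two_inner_of_indepFun hXY hX hY).integrable_sq
  have hnorm : Integrable (fun x : H => σ * ‖x‖ ^ 2) (P.map X) :=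
    ((integrable_map_measure (f := X) (g := fun x => ‖x‖ ^ 2) (by fun_prop) hXm).2
      hX.norm.integrable_sq).const_mul σ
  calc ∫ ω, ⟪X ω, Y ω⟫ ^ 2 ∂P
      = ∫ z : H × H, ⟪z.1, z.2⟫ ^ 2 ∂P.map (fun ω => (X ω, Y ω)) :=
        (integral_map (hXm.prodMk hYm) hcont.aestronglyMeasurable).symm
    _ = ∫ x, ∫ y, ⟪x, y⟫ ^ 2 ∂P.map Y ∂P.map X := by rw [hlaw, integral_prod _ hint]
    _ ≤ ∫ x, σ * ‖x‖ ^ 2 ∂P.map X := by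
      refine integral_mono hint.integral_prod_left hnorm fun x => ?_
      exact (integral_map hYm (by fun_prop)).trans_le (hσ x)
    _ = σ * ∫ ω, ‖X ω‖ ^ 2 ∂P := by rw [integral_const_mul, integral_map hXm (by fun_prop)]

theorem integral_inner_eq_zero_of_indepFun [CompleteSpace H] (hXY : X ⟂ᵢ[P] Y)
    (hX : Integrable X P) (hY : Integrable Y P) (hY0 : ∫ ω, Y ω ∂P = 0) :
    ∫ ω, ⟪X ω, Y ω⟫ ∂P = 0 := by
  have hinner := hXY.integral_bilin hX hY (innerSL ℝ)
  rwa [hY0, map_zero] at hinner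

theorem integral_norm_add_sq_of_indepFun [CompleteSpace H] [IsFiniteMeasure P] (hXY : X ⟂ᵢ[P] Y)
    (hX : MemLp X 2 P) (hY : MemLp Y 2 P) (hY0 : ∫ ω, Y ω ∂P = 0) :
    ∫ ω, ‖X ω + Y ω‖ ^ 2 ∂P = ∫ ω, ‖X ω‖ ^ 2 ∂P + ∫ ω, ‖Y ω‖ ^ 2 ∂P := by
  have hinner : Integrable (fun ω => ⟪X ω, Y ω⟫) P :=
    (memLp_two_inner_of_indepFun hXY hX hY).integrable one_le_two
  have hleft : Integrable (fun ω => ‖X ω‖ ^ 2 + 2 * ⟪X ω, Y ω⟫) P :=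
    hX.norm.integrable_sq.add (hinner.const_mul 2)
  simp only [norm_add_sq_real]
  rw [integral_add hleft hY.norm.integrable_sq,
    integral_add hX.norm.integrable_sq (hinner.const_mul 2), integral_const_mul,
    integral_inner_eq_zero_of_indepFun hXY (hX.integrable one_le_two)
      (hY.integrable one_le_two) hY0,
    mul_zero, add_zero]

end IndependentPair

section OffDiagGramSum

variable {H : Type*} [NormedAddCommGroup H] [InnerProductSpace ℝ H]

/-- The off-diagonal part `∑_{1 ≤ l ≠ k' ≤ k} ⟪x_l, x_{k'}⟫` of the sum of the Gram matrix of
`x_1, …, x_k`. Applied to random vectors it is the statistic written `Q_{1,k}` in the paper. The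
indices start at `1`, so `x 0` does not enter. -/
def offDiagGramSum (x : ℕ → H) (k : ℕ) : ℝ :=
  ∑ l ∈ Finset.Icc 1 k, ∑ k' ∈ Finset.Icc 1 k, if l ≠ k' then ⟪x l, x k'⟫ else 0

theorem offDiagGramSum_zero (x : ℕ → H) : offDiagGramSum x 0 = 0 := by
  simp [offDiagGramSum]

theorem offDiagGramSum_eq_norm_sq_sub (x : ℕ → H) (k : ℕ) :
    offDiagGramSum x k =
      ‖∑ i ∈ Finset.Icc 1 k, x i‖ ^ 2 - ∑ i ∈ Finset.Icc 1 k, ‖x i‖ ^ 2 := by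
  rw [← real_inner_self_eq_norm_sq, sum_inner, ← Finset.sum_sub_distrib]
  refine Finset.sum_congr rfl fun l hl => ?_
  rw [inner_sum, ← Finset.sum_erase_add _ _ hl, ← Finset.sum_erase_add _ _ hl,
    real_inner_self_eq_norm_sq, add_sub_cancel_right, if_neg (not_not.2 rfl), add_zero]
  exact Finset.sum_congr rfl fun k' hk' => if_pos (Finset.ne_of_mem_erase hk').symm

theorem offDiagGramSum_succ (x : ℕ → H) (k : ℕ) :
    offDiagGramSum x (k + 1) =
      offDiagGramSum x k + 2 * ⟪∑ i ∈ Finset.Icc 1 k, x i, x (k + 1)⟫ := by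
  simp only [offDiagGramSum_eq_norm_sq_sub, Finset.sum_Icc_succ_top (Nat.le_add_left 1 k),
    norm_add_sq_real]
  ring

variable [MeasurableSpace H] [BorelSpace H] {Ω : Type*} [MeasurableSpace Ω] {P : Measure Ω}
  {X : ℕ → Ω → H}

theorem stronglyAdapted_natural_offDiagGramSum (hX : ∀ i, StronglyMeasurable (X i)) :
    StronglyAdapted (Filtration.natural X hX) fun k ω => offDiagGramSum (X · ω) k := by
  intro k
  have hX' : ∀ i ∈ Finset.Icc 1 k, StronglyMeasurable[Filtration.natural X hX k] (X i) :=
    fun i hi =>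
      (Filtration.stronglyAdapted_natural hX).stronglyMeasurable_le (Finset.mem_Icc.1 hi).2
  simp only [offDiagGramSum_eq_norm_sq_sub]
  exact ((stronglyMeasurable_natural_sum_Icc hX k).norm.pow 2).sub
    (Finset.stronglyMeasurable_fun_sum _ fun i hi => (hX' i hi).norm.pow 2)

variable [SecondCountableTopology H]

theorem memLp_two_offDiagGramSum (hmeas : ∀ i, Measurable (X i)) (hindep : iIndepFun X P)
    (hL2 : ∀ i, MemLp (X i) 2 P) (k : ℕ) :
    MemLp (fun ω => offDiagGramSum (X · ω) k) 2 P := by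
  induction k with
  | zero => simp only [offDiagGramSum_zero, MemLp.zero']
  | succ k ih =>
    simp only [offDiagGramSum_succ]
    exact ih.add ((memLp_two_inner_of_indepFun (indepFun_sum_Icc_succ hmeas hindep k)
      (memLp_finsetSum _ fun i _ => hL2 i) (hL2 _)).const_mul 2)

variable [CompleteSpace H]

theorem integral_norm_sum_Icc_sq_le (hmeas : ∀ i, Measurable (X i)) (hindep : iIndepFun X P)
    (hL2 : ∀ i, MemLp (X i) 2 P) (hmean : ∀ i, ∫ ω, X i ω ∂P = 0) {τ : ℝ}
    (hτ : ∀ i, ∫ ω, ‖X i ω‖ ^ 2 ∂P ≤ τ) (k : ℕ) :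
    ∫ ω, ‖∑ i ∈ Finset.Icc 1 k, X i ω‖ ^ 2 ∂P ≤ k * τ := by
  have := hindep.isProbabilityMeasure
  induction k with
  | zero => simp
  | succ k ih =>
    simp only [Finset.sum_Icc_succ_top (Nat.le_add_left 1 k)]
    rw [integral_norm_add_sq_of_indepFun (indepFun_sum_Icc_succ hmeas hindep k)
      (memLp_finsetSum _ fun i _ => hL2 i) (hL2 _) (hmean _)]
    push_cast
    linarith [hτ (k + 1)]

theorem martingale_offDiagGramSum (hX : ∀ i, StronglyMeasurable (X i)) (hindep : iIndepFun X P)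
    (hL2 : ∀ i, MemLp (X i) 2 P) (hmean : ∀ i, ∫ ω, X i ω ∂P = 0) :
    Martingale (fun k ω => offDiagGramSum (X · ω) k) (Filtration.natural X hX) P := by
  have := hindep.isProbabilityMeasure
  have hmeas : ∀ i, Measurable (X i) := fun i => (hX i).measurable
  refine martingale_of_condExp_sub_eq_zero_nat (stronglyAdapted_natural_offDiagGramSum hX)
    (fun k => (memLp_two_offDiagGramSum hmeas hindep hL2 k).integrable one_le_two) fun k => ?_
  have hcentred : P[X (k + 1) | Filtration.natural X hX k] =ᵐ[P] 0 := by
    have hconst := hindep.condExp_natural_ae_eq_of_lt hX k.lt_succ_self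
    rwa [hmean] at hconst
  have hincr : (fun ω => offDiagGramSum (X · ω) (k + 1)) - (fun ω => offDiagGramSum (X · ω) k) =
      fun ω => ((2 : ℝ) • innerSL ℝ) (∑ i ∈ Finset.Icc 1 k, X i ω) (X (k + 1) ω) := by
    ext ω
    simp only [Pi.sub_apply, offDiagGramSum_succ, add_sub_cancel_left,
      smul_apply, innerSL_apply_apply, smul_eq_mul]
  have hint := (memLp_two_offDiagGramSum hmeas hindep hL2 (k + 1)).sub
    (memLp_two_offDiagGramSum hmeas hindep hL2 k) |>.integrable one_le_two
  rw [hincr] at hint ⊢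
  exact condExp_bilin_ae_eq_zero _ (stronglyMeasurable_natural_sum_Icc hX k) hint
    ((hL2 _).integrable one_le_two) hcentred

theorem integral_offDiagGramSum_sq_le (hmeas : ∀ i, Measurable (X i)) (hindep : iIndepFun X P)
    (hL2 : ∀ i, MemLp (X i) 2 P) (hmean : ∀ i, ∫ ω, X i ω ∂P = 0) {τ σ : ℝ}
    (hτ : ∀ i, ∫ ω, ‖X i ω‖ ^ 2 ∂P ≤ τ) (hσ0 : 0 ≤ σ)
    (hσ : ∀ i x, ∫ ω, ⟪x, X i ω⟫ ^ 2 ∂P ≤ σ * ‖x‖ ^ 2) (k : ℕ) :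
    ∫ ω, offDiagGramSum (X · ω) k ^ 2 ∂P ≤ 2 * k * ((k : ℝ) - 1) * (τ * σ) := by
  have := hindep.isProbabilityMeasure
  induction k with
  | zero => simp [offDiagGramSum_zero]
  | succ k ih =>
    have hincr : ∫ ω, ⟪∑ i ∈ Finset.Icc 1 k, X i ω, X (k + 1) ω⟫ ^ 2 ∂P ≤ σ * (k * τ) :=
      (integral_inner_sq_le_of_indepFun (indepFun_sum_Icc_succ hmeas hindep k)
        (memLp_finsetSum _ fun i _ => hL2 i) (hL2 _) (hσ _)).trans <|
      mul_le_mul_of_nonneg_left (integral_norm_sum_Icc_sq_le hmeas hindep hL2 hmean hτ k) hσ0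
    calc ∫ ω, offDiagGramSum (X · ω) (k + 1) ^ 2 ∂P
        = ∫ ω, offDiagGramSum (X · ω) k ^ 2 ∂P
            + 4 * ∫ ω, ⟪∑ i ∈ Finset.Icc 1 k, X i ω, X (k + 1) ω⟫ ^ 2 ∂P := by
          rw [integral_sq_succ_of_martingale (martingale_offDiagGramSum
            (fun i => (hmeas i).stronglyMeasurable) hindep hL2 hmean)
            (memLp_two_offDiagGramSum hmeas hindep hL2), ← integral_const_mul]
          congr with ω
          rw [offDiagGramSum_succ]
          ring
      _ ≤ 2 * k * ((k : ℝ) - 1) * (τ * σ) + 4 * (σ * (k * τ)) := by gcongr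
      _ = 2 * (k + 1 : ℕ) * (((k + 1 : ℕ) : ℝ) - 1) * (τ * σ) := by push_cast; ring

theorem Q_maximal_inequality_general (hmeas : ∀ i, Measurable (X i)) (hindep : iIndepFun X P)
    (hL2 : ∀ i, MemLp (X i) 2 P) (hmean : ∀ i, ∫ ω, X i ω ∂P = 0) {τ σ : ℝ}
    (hτ : ∀ i, ∫ ω, ‖X i ω‖ ^ 2 ∂P ≤ τ) (hσ0 : 0 ≤ σ)
    (hσ : ∀ i x, ∫ ω, ⟪x, X i ω⟫ ^ 2 ∂P ≤ σ * ‖x‖ ^ 2)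
    {N : ℕ} (hN : 1 ≤ N) {r : ℝ} (hr : 0 < r) :
    P.real {ω | r ≤ (Finset.Icc 1 N).sup' (Finset.nonempty_Icc.mpr hN) fun k =>
          |offDiagGramSum (X · ω) k|}
        ≤ (r ^ 2)⁻¹ * ∫ ω, offDiagGramSum (X · ω) N ^ 2 ∂P ∧
      (r ^ 2)⁻¹ * ∫ ω, offDiagGramSum (X · ω) N ^ 2 ∂P
        ≤ 2 * (r ^ 2)⁻¹ * N * ((N : ℝ) - 1) * (τ * σ) := by
  have := hindep.isProbabilityMeasure
  constructor
  · exact measureReal_le_sup'_abs_le_of_martingale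
      (martingale_offDiagGramSum (fun i => (hmeas i).stronglyMeasurable) hindep hL2 hmean)
      (memLp_two_offDiagGramSum hmeas hindep hL2) _ (fun k hk => (Finset.mem_Icc.1 hk).2) hr
  · calc (r ^ 2)⁻¹ * ∫ ω, offDiagGramSum (X · ω) N ^ 2 ∂P
        ≤ (r ^ 2)⁻¹ * (2 * N * ((N : ℝ) - 1) * (τ * σ)) := by
          gcongr
          exact integral_offDiagGramSum_sq_le hmeas hindep hL2 hmean hτ hσ0 hσ N
      _ = 2 * (r ^ 2)⁻¹ * N * ((N : ℝ) - 1) * (τ * σ) := by ring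

end OffDiagGramSum

section EuclideanSpace

variable {ι Ω : Type*} [Fintype ι] [MeasurableSpace Ω] {P : Measure Ω}
  {Y : Ω → EuclideanSpace ℝ ι}

theorem integral_inner_sq_eq_sum_of_uncorrelated (hY : MemLp Y 2 P)
    (huncorr : ∀ j k, j ≠ k → ∫ ω, Y ω j * Y ω k ∂P = 0) (x : EuclideanSpace ℝ ι) :
    ∫ ω, ⟪x, Y ω⟫ ^ 2 ∂P = ∑ j, x j ^ 2 * ∫ ω, Y ω j ^ 2 ∂P := by
  classical
  have hint : ∀ j k, Integrable (fun ω => x j * x k * (Y ω j * Y ω k)) P := fun j k =>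
    ((hY.eval_piLp j).integrable_mul (hY.eval_piLp k)).const_mul _
  calc ∫ ω, ⟪x, Y ω⟫ ^ 2 ∂P = ∫ ω, ∑ j, ∑ k, x j * x k * (Y ω j * Y ω k) ∂P := by
        congr with ω
        simp only [PiLp.inner_apply, sq, Finset.sum_mul_sum, RCLike.inner_apply, conj_trivial]
        exact Finset.sum_congr rfl fun j _ => Finset.sum_congr rfl fun k _ => by ring
    _ = ∑ j, ∑ k, x j * x k * ∫ ω, Y ω j * Y ω k ∂P := by
        simp only [integral_finsetSum _ fun j _ => integrable_finsetSum _ fun k _ => hint j k,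
          integral_finsetSum _ fun k _ => hint _ k, integral_const_mul]
    _ = ∑ j, x j ^ 2 * ∫ ω, Y ω j ^ 2 ∂P := by
        refine Finset.sum_congr rfl fun j _ => ?_
        rw [Finset.sum_eq_single j (fun k _ hkj => by rw [huncorr j k hkj.symm, mul_zero])
          (by simp)]
        simp only [sq]

theorem integral_inner_sq_le_iSup_of_uncorrelated (hY : MemLp Y 2 P)
    (huncorr : ∀ j k, j ≠ k → ∫ ω, Y ω j * Y ω k ∂P = 0) (x : EuclideanSpace ℝ ι) :
    ∫ ω, ⟪x, Y ω⟫ ^ 2 ∂P ≤ (⨆ j, ∫ ω, Y ω j ^ 2 ∂P) * ‖x‖ ^ 2 := by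
  rw [integral_inner_sq_eq_sum_of_uncorrelated hY huncorr, EuclideanSpace.real_norm_sq_eq,
    Finset.mul_sum]
  refine Finset.sum_le_sum fun j _ => ?_
  rw [mul_comm]
  gcongr
  exact le_ciSup (f := fun j => ∫ ω, Y ω j ^ 2 ∂P) (Set.finite_range _).bddAbove j

end EuclideanSpace

/-- Doob-type maximal inequality for `Q_{1,k} = Σ_{1≤l≠k'≤k} ⟨X_l, X_{k'}⟩`.
Under conditions (a) and (b), for `N ≥ 1` and `λ > 0`,
`P(max_{1≤k≤N} |Q_{1,k}| ≥ λ) ≤ λ⁻² E(Q_{1,N})² ≤ 2 λ⁻² N(N−1) max_{1≤j≤d} E(X_{1,j})²`. -/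
theorem Q_maximal_inequality
    {Ω : Type*} [MeasurableSpace Ω] (P : Measure Ω) [IsProbabilityMeasure P]
    (d : ℕ) (X : ℕ → Ω → EuclideanSpace ℝ (Fin d))
    (hmeas : ∀ i, Measurable (X i))
    (hindep : ProbabilityTheory.iIndepFun X P)
    (hident : ∀ i, Measure.map (X i) P = Measure.map (X 1) P)
    (hL2 : ∀ i, MemLp (X i) 2 P)
    -- (a): centred and normalized
    (ha1 : ∫ ω, X 1 ω ∂P = 0)
    (ha2 : ∫ ω, ‖X 1 ω‖ ^ 2 ∂P = 1)
    -- (b): uncorrelated components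
    (hb : ∀ j k : Fin d, j ≠ k → ∫ ω, (X 1 ω j) * (X 1 ω k) ∂P = 0)
    (N : ℕ) (hN : 1 ≤ N) (lam : ℝ) (hlam : 0 < lam) :
    ((P {ω | lam ≤ (Finset.Icc 1 N).sup' (Finset.nonempty_Icc.mpr hN) fun k =>
          |∑ l ∈ Finset.Icc 1 k, ∑ k' ∈ Finset.Icc 1 k,
            if l ≠ k' then ⟪X l ω, X k' ω⟫ else 0|}).toReal
        ≤ (lam ^ 2)⁻¹ * ∫ ω, (∑ l ∈ Finset.Icc 1 N, ∑ k' ∈ Finset.Icc 1 N,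
            if l ≠ k' then ⟪X l ω, X k' ω⟫ else 0) ^ 2 ∂P) ∧
    ((lam ^ 2)⁻¹ * (∫ ω, (∑ l ∈ Finset.Icc 1 N, ∑ k' ∈ Finset.Icc 1 N,
            if l ≠ k' then ⟪X l ω, X k' ω⟫ else 0) ^ 2 ∂P)
        ≤ 2 * (lam ^ 2)⁻¹ * N * ((N : ℝ) - 1) *
            ⨆ j : Fin d, ∫ ω, (X 1 ω j) ^ 2 ∂P) := by
  have hdist : ∀ i, IdentDistrib (X i) (X 1) P P := fun i =>
    ⟨(hmeas i).aemeasurable, (hmeas 1).aemeasurable, hident i⟩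
  simpa only [one_mul, measureReal_def, offDiagGramSum] using
    Q_maximal_inequality_general hmeas hindep hL2
      (fun i => (hdist i).integral_eq.trans ha1)
      (fun i => ((hdist i).norm.sq.integral_eq.trans ha2).le)
      (Real.iSup_nonneg fun j => integral_nonneg fun ω => sq_nonneg _)
      (fun i x => ((hdist i).comp (u := fun y => ⟪x, y⟫ ^ 2) (by fun_prop)).integral_eq.trans_le
        (integral_inner_sq_le_iSup_of_uncorrelated (hL2 1) hb x)) hN hlam
end

section
/- Let (e_k)_{k∈ℕ} be the standard orthonormal basis of ℓ², and let (x_k)_{k∈ℕ} ⊂ [0,∞) and (y_k)_{k∈ℕ} ⊂ (0,∞) be sequences such that Σ_{k: x_k ≤ 1} y_k < ∞. For t ∈ [0,1] and s > 0 set F(t) := Σ_{k: x_k ≤ t} e_k y_k^{1/2} − t Σ_{k: x_k ≤ 1} e_k y_k^{1/2} and F_s(t) := Σ_{k: x_k ≤ t} e_k y_k^{1/2} 𝟙_{y_k > s} − t Σ_{k: x_k ≤ 1} e_k y_k^{1/2} 𝟙_{y_k > s}, and let R := closure{F(t) : t ∈ [0,1]} and R(s) := {F_s(t) : t ∈ [0,1]},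 both subsets of ℓ². Then the Hausdorff distance satisfies d_H(R(s), R) ≤ 2 (Σ_{k: x_k ≤ 1} y_k 𝟙_{y_k ≤ s})^{1/2}, and consequently d_H(R(s), R) → 0 as s ↓ 0. -/
open Filter

/-! At a time `t ∈ [0, 1]` the vector `F t - F_s t` only has components along those `e k` with
`x k ≤ 1` and `y k ≤ s`, namely `√(y k)` times `𝟙 (x k ≤ t) - t`, a factor of absolute value at
most one. By Parseval `‖F t - F_s t‖² ≤ ∑ y k` over these `k`, uniformly in `t`, and a uniform bound
on the distance of two parametrised curves bounds the Hausdorff distance of their ranges. This sum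
of small terms of a convergent series tends to `0` with the threshold `s`, by dominated
convergence. -/

theorem hausdorffDist_range_le {α X : Type*} [PseudoMetricSpace X] {f g : α → X} {r : ℝ}
    (hr : 0 ≤ r) (h : ∀ a, dist (f a) (g a) ≤ r) :
    Metric.hausdorffDist (Set.range f) (Set.range g) ≤ r := by
  refine Metric.hausdorffDist_le_of_mem_dist hr ?_ ?_
  · rintro _ ⟨a, rfl⟩
    exact ⟨g a, ⟨a, rfl⟩, h a⟩
  · rintro _ ⟨a, rfl⟩
    exact ⟨f a, ⟨a, rfl⟩, dist_comm (f a) (g a) ▸ h a⟩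

section SmallTerms

variable {ι : Type*}

theorem tendsto_tsum_ite_le_nhds_zero {f : ι → ℝ} (hf₀ : ∀ k, 0 ≤ f k) (hf : Summable f) :
    Tendsto (fun s : ℝ => ∑' k, if f k ≤ s then f k else 0) (nhds 0) (nhds 0) := by
  suffices h_lim : Tendsto (fun s : ℝ => ∑' k, if f k ≤ s then f k else 0) (nhds 0)
      (nhds (∑' _ : ι, (0 : ℝ))) by
    simpa only [tsum_zero] using h_lim
  refine tendsto_tsum_of_dominated_convergence hf (fun k => ?_) (.of_forall fun s k => ?_)
  · refine tendsto_const_nhds.congr' ?_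
    rcases (hf₀ k).eq_or_lt with h_zero | h_pos
    · simp [← h_zero]
    · filter_upwards [Iio_mem_nhds h_pos] with s hs
      rw [if_neg (not_le.mpr hs)]
  · split_ifs
    · exact (Real.norm_of_nonneg (hf₀ k)).le
    · simpa only [norm_zero] using hf₀ k

theorem tendsto_tsum_ite_and_le_nhds_zero {p : ι → Prop} [DecidablePred p] {y : ι → ℝ}
    (hy : ∀ k, 0 ≤ y k) (hsum : Summable fun k => if p k then y k else 0) :
    Tendsto (fun s : ℝ => ∑' k, if p k ∧ y k ≤ s then y k else 0) (nhds 0) (nhds 0) := by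
  have h_nonneg (k : ι) : 0 ≤ if p k then y k else 0 := by
    split_ifs
    exacts [hy k, le_rfl]
  refine (tendsto_tsum_ite_le_nhds_zero h_nonneg hsum).congr fun s => tsum_congr fun k => ?_
  by_cases hk : p k <;> simp [hk]

end SmallTerms

section Orthonormal

variable {𝕜 ι E : Type*} [RCLike 𝕜]

theorem orthonormal_lp_single [DecidableEq ι] :
    Orthonormal 𝕜 fun k : ι => lp.single (E := fun _ => 𝕜) 2 k (1 : 𝕜) := by
  simp only [orthonormal_iff_ite, lp.inner_single_left, lp.single_apply, Pi.single_apply]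
  simp

variable [NormedAddCommGroup E] [InnerProductSpace 𝕜 E] [CompleteSpace E] {e : ι → E} {c : ι → 𝕜}

theorem summable_smul_of_orthonormal (he : Orthonormal 𝕜 e) (hc : Summable fun k => ‖c k‖ ^ 2) :
    Summable fun k => c k • e k :=
  (he.orthogonalFamily.summable_iff_norm_sq_summable c).mpr hc

theorem norm_sq_tsum_smul_of_orthonormal (he : Orthonormal 𝕜 e)
    (hc : Summable fun k => ‖c k‖ ^ 2) : ‖∑' k, c k • e k‖ ^ 2 = ∑' k, ‖c k‖ ^ 2 := by
  have h_sum := (summable_smul_of_orthonormal he hc).hasSum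
  refine tendsto_nhds_unique (h_sum.norm.pow 2) (hc.hasSum.congr fun A => ?_)
  exact (he.orthogonalFamily.norm_sum c A).symm

end Orthonormal

section Bridge

variable {ι E : Type*} {x : ι → ℝ} {s t : ℝ}

/-- The bridge of the pure jump path with jump `v k` at time `x k`, that is, the path minus its
linear interpolation between time `0`, where it is taken to vanish, and time `1`. -/
noncomputable def bridge [NormedAddCommGroup E] [NormedSpace ℝ E] (x : ι → ℝ) (v : ι → E)
    (t : ℝ) : E :=
  (∑' k, if x k ≤ t then v k else 0) - t • ∑' k, if x k ≤ 1 then v k else 0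

/-- The value at time `t` of the real-valued bridge with a single unit jump, at time `a`; it is the
factor with which a jump at time `a` enters `bridge`. -/
noncomputable def bridgeCoeff (t a : ℝ) : ℝ :=
  (if a ≤ t then 1 else 0) - t * if a ≤ 1 then 1 else 0

theorem bridgeCoeff_of_one_lt {a : ℝ} (ht : t ≤ 1) (ha : 1 < a) : bridgeCoeff t a = 0 := by
  simp [bridgeCoeff, ha.not_ge, (ht.trans_lt ha).not_ge]

theorem abs_bridgeCoeff_le_one {a : ℝ} (ht : t ∈ Set.Icc (0 : ℝ) 1) : |bridgeCoeff t a| ≤ 1 := by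
  obtain ⟨ht₀, ht₁⟩ := ht
  unfold bridgeCoeff
  split_ifs <;> rw [abs_le] <;> constructor <;> linarith

theorem summable_ite_le_of_le [NormedAddCommGroup E] [CompleteSpace E] {v : ι → E}
    (hst : s ≤ t) (hv : Summable fun k => if x k ≤ t then v k else 0) :
    Summable fun k => if x k ≤ s then v k else 0 := by
  refine (hv.indicator {k | x k ≤ s}).congr fun k => ?_
  by_cases hk : x k ≤ s
  · simp [hk, hk.trans hst]
  · simp [hk]

section NormedSpace

variable [NormedAddCommGroup E] [NormedSpace ℝ E] [CompleteSpace E] {v w : ι → E}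

theorem hasSum_bridge (ht : t ≤ 1) (hv : Summable fun k => if x k ≤ 1 then v k else 0) :
    HasSum (fun k => bridgeCoeff t (x k) • v k) (bridge x v t) := by
  refine ((summable_ite_le_of_le ht hv).hasSum.sub (hv.hasSum.const_smul t)).congr_fun ?_
  simp [bridgeCoeff, sub_smul, ite_smul]

theorem bridge_sub (ht : t ≤ 1) (hv : Summable fun k => if x k ≤ 1 then v k else 0)
    (hw : Summable fun k => if x k ≤ 1 then w k else 0) :
    bridge x (v - w) t = bridge x v t - bridge x w t := by
  have hvw : Summable fun k => if x k ≤ 1 then (v - w) k else 0 :=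
    (hv.sub hw).congr fun k => by split_ifs <;> simp
  refine (hasSum_bridge ht hvw).unique ?_
  simpa only [Pi.sub_apply, smul_sub] using (hasSum_bridge ht hv).sub (hasSum_bridge ht hw)

end NormedSpace

section Orthonormal

variable [NormedAddCommGroup E] [InnerProductSpace ℝ E] [CompleteSpace E] {e : ι → E}

theorem summable_ite_smul_of_orthonormal (he : Orthonormal ℝ e) {c : ι → ℝ} {p : ι → Prop}
    [DecidablePred p] (hc : Summable fun k => if p k then c k ^ 2 else 0) :
    Summable fun k => if p k then c k • e k else 0 := by
  have h_sq : Summable fun k => ‖if p k then c k else 0‖ ^ 2 :=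
    hc.congr fun k => by split_ifs <;> simp
  simpa only [ite_smul, zero_smul] using summable_smul_of_orthonormal he h_sq

theorem norm_bridge_le (he : Orthonormal ℝ e) {c : ι → ℝ} (ht : t ∈ Set.Icc (0 : ℝ) 1)
    (hc : Summable fun k => if x k ≤ 1 then c k ^ 2 else 0) :
    ‖bridge x (fun k => c k • e k) t‖ ≤ √(∑' k, if x k ≤ 1 then c k ^ 2 else 0) := by
  have h_le (k : ι) : ‖bridgeCoeff t (x k) * c k‖ ^ 2 ≤ if x k ≤ 1 then c k ^ 2 else 0 := by
    split_ifs with hk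
    · rw [Real.norm_eq_abs, sq_abs, mul_pow]
      exact mul_le_of_le_one_left (sq_nonneg _) ((sq_le_one_iff_abs_le_one _).mpr
        (abs_bridgeCoeff_le_one ht))
    · simp [bridgeCoeff_of_one_lt ht.2 (not_le.mp hk)]
  have h_sq : Summable fun k => ‖bridgeCoeff t (x k) * c k‖ ^ 2 :=
    hc.of_nonneg_of_le (fun k => sq_nonneg _) h_le
  refine Real.le_sqrt_of_sq_le ?_
  calc ‖bridge x (fun k => c k • e k) t‖ ^ 2
      = ‖∑' k, (bridgeCoeff t (x k) * c k) • e k‖ ^ 2 := by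
        simp only [mul_smul,
          (hasSum_bridge ht.2 (summable_ite_smul_of_orthonormal he hc)).tsum_eq]
    _ = ∑' k, ‖bridgeCoeff t (x k) * c k‖ ^ 2 := norm_sq_tsum_smul_of_orthonormal he h_sq
    _ ≤ ∑' k, if x k ≤ 1 then c k ^ 2 else 0 := h_sq.tsum_le_tsum h_le hc

theorem dist_bridge_ite_le (he : Orthonormal ℝ e) {c : ι → ℝ} (p : ι → Prop) [DecidablePred p]
    (ht : t ∈ Set.Icc (0 : ℝ) 1) (hc : Summable fun k => if x k ≤ 1 then c k ^ 2 else 0) :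
    dist (bridge x (fun k => if p k then c k • e k else 0) t) (bridge x (fun k => c k • e k) t) ≤
      √(∑' k, if x k ≤ 1 ∧ ¬p k then c k ^ 2 else 0) := by
  set kept : ι → E := fun k => if p k then c k • e k else 0
  set dropped : ι → ℝ := fun k => if p k then 0 else c k
  have h_all := summable_ite_smul_of_orthonormal he hc
  have h_kept : Summable fun k => if x k ≤ 1 then kept k else 0 :=
    (h_all.indicator {k | p k}).congr fun k => by
      by_cases hk : p k <;> simp [kept, hk]
  have h_dropped_sq (k : ι) : (if x k ≤ 1 then dropped k ^ 2 else 0) =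
      if x k ≤ 1 ∧ ¬p k then c k ^ 2 else 0 := by
    by_cases hk : p k <;> simp [dropped, hk]
  have h_dropped : Summable fun k => if x k ≤ 1 then dropped k ^ 2 else 0 :=
    (hc.indicator {k | ¬p k}).congr fun k => by
      by_cases hk : p k <;> simp [dropped, hk]
  have h_diff : (fun k => c k • e k) - kept = fun k => dropped k • e k := by
    ext k
    by_cases hk : p k <;> simp [kept, dropped, hk]
  rw [dist_comm, dist_eq_norm, ← bridge_sub ht.2 h_all h_kept, h_diff]
  simpa only [h_dropped_sq] using norm_bridge_le he ht h_dropped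

theorem hausdorffDist_range_bridge_truncated_le (he : Orthonormal ℝ e) {y : ι → ℝ}
    (hy : ∀ k, 0 ≤ y k) (hsum : Summable fun k => if x k ≤ 1 then y k else 0) (s : ℝ) :
    Metric.hausdorffDist
        (Set.range fun t : Set.Icc (0 : ℝ) 1 =>
          bridge x (fun k => if s < y k then √(y k) • e k else 0) t)
        (closure (Set.range fun t : Set.Icc (0 : ℝ) 1 => bridge x (fun k => √(y k) • e k) t))
      ≤ √(∑' k, if x k ≤ 1 ∧ y k ≤ s then y k else 0) := by
  have h_sq (k : ι) : √(y k) ^ 2 = y k := Real.sq_sqrt (hy k)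
  rw [Metric.hausdorffDist_closure₂]
  refine hausdorffDist_range_le (Real.sqrt_nonneg _) fun t => ?_
  simpa only [h_sq, not_lt] using
    dist_bridge_ite_le he (c := fun k => √(y k)) (fun k => s < y k) t.2 (by simpa only [h_sq])

theorem truncated_bridge_hausdorff_general (he : Orthonormal ℝ e) {y : ι → ℝ}
    (hy : ∀ k, 0 ≤ y k) (hsum : Summable fun k => if x k ≤ 1 then y k else 0) :
    (∀ s : ℝ,
      Metric.hausdorffDist
          (Set.range fun t : Set.Icc (0 : ℝ) 1 =>
            bridge x (fun k => if s < y k then √(y k) • e k else 0) t)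
          (closure (Set.range fun t : Set.Icc (0 : ℝ) 1 => bridge x (fun k => √(y k) • e k) t))
        ≤ √(∑' k, if x k ≤ 1 ∧ y k ≤ s then y k else 0)) ∧
    Tendsto
      (fun s : ℝ => Metric.hausdorffDist
          (Set.range fun t : Set.Icc (0 : ℝ) 1 =>
            bridge x (fun k => if s < y k then √(y k) • e k else 0) t)
          (closure (Set.range fun t : Set.Icc (0 : ℝ) 1 => bridge x (fun k => √(y k) • e k) t)))
      (nhds 0) (nhds 0) := by
  have h_bound := hausdorffDist_range_bridge_truncated_le (x := x) he hy hsum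
  have h_tail := (tendsto_tsum_ite_and_le_nhds_zero hy hsum).sqrt
  rw [Real.sqrt_zero] at h_tail
  exact ⟨h_bound, squeeze_zero (fun s => Metric.hausdorffDist_nonneg) h_bound h_tail⟩

end Orthonormal

end Bridge

/-- truncation approximation of the bridge set in `ℓ²`.
With `F(t) = Σ_{x_k ≤ t} √y_k e_k − t Σ_{x_k ≤ 1} √y_k e_k` and its truncation `F_s`
(keeping only the terms with `y_k > s`), and `R = closure{F(t) : t ∈ [0,1]}`,
`R(s) = {F_s(t) : t ∈ [0,1]}`, one has
`d_H(R(s), R) ≤ 2 (Σ_{x_k ≤ 1, y_k ≤ s} y_k)^{1/2}` and hence `d_H(R(s), R) → 0` as `s ↓ 0`. -/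
theorem truncated_bridge_hausdorff
    (x : ℕ → ℝ) (y : ℕ → ℝ) (hx : ∀ k, 0 ≤ x k) (hy : ∀ k, 0 < y k)
    (hsum : Summable (fun k => if x k ≤ 1 then y k else 0))
    (F : ℝ → lp (fun _ : ℕ => ℝ) 2)
    (hF : ∀ t, F t
      = (∑' k, if x k ≤ t then Real.sqrt (y k) • lp.single 2 k (1 : ℝ) else 0)
        - t • (∑' k, if x k ≤ 1 then Real.sqrt (y k) • lp.single 2 k (1 : ℝ) else 0))
    (Fs : ℝ → ℝ → lp (fun _ : ℕ => ℝ) 2)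
    (hFs : ∀ s t, Fs s t
      = (∑' k, if x k ≤ t ∧ s < y k then Real.sqrt (y k) • lp.single 2 k (1 : ℝ) else 0)
        - t • (∑' k, if x k ≤ 1 ∧ s < y k then Real.sqrt (y k) • lp.single 2 k (1 : ℝ) else 0)) :
    (∀ s > (0 : ℝ),
      Metric.hausdorffDist
          (Set.range fun t : Set.Icc (0 : ℝ) 1 => Fs s t)
          (closure (Set.range fun t : Set.Icc (0 : ℝ) 1 => F t))
        ≤ 2 * Real.sqrt (∑' k, if x k ≤ 1 ∧ y k ≤ s then y k else 0)) ∧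
    Tendsto
      (fun s => Metric.hausdorffDist
          (Set.range fun t : Set.Icc (0 : ℝ) 1 => Fs s t)
          (closure (Set.range fun t : Set.Icc (0 : ℝ) 1 => F t)))
      (nhdsWithin 0 (Set.Ioi 0)) (nhds 0) := by
  obtain rfl : F = bridge x fun k => √(y k) • lp.single 2 k (1 : ℝ) := funext hF
  obtain rfl : Fs = fun s => bridge x fun k =>
      if s < y k then √(y k) • lp.single 2 k (1 : ℝ) else 0 := by
    funext s t
    simp only [hFs, ite_and, bridge]
  obtain ⟨h_bound, h_lim⟩ :=
    truncated_bridge_hausdorff_general orthonormal_lp_single (fun k => (hy k).le) hsum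
  exact ⟨fun s _ => (h_bound s).trans (le_mul_of_one_le_left (Real.sqrt_nonneg _) one_le_two),
    h_lim.mono_left nhdsWithin_le_nhds⟩
end

section
/- Let X_1, …, X_n be i.i.d. random vectors in ℝ^d, let s > 0, a > 0, ε > 0, and set Y_j := X_j 𝟙_{‖X_j‖² ≤ sa}. Then P( max_{1≤k≤n} ‖ Σ_{j=1}^{k} (Y_j − E Y_j) − (k/n) Σ_{j=1}^{n} (Y_j − E Y_j) ‖ ≥ 2^{-1} ε √a ) ≤ 64 ε^{-2} a^{-1} n E( ‖X_1‖² 𝟙_{‖X_1‖² ≤ sa} ). -/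
open MeasureTheory

/-! If the bridge of a walk `S` reaches `c` at some time `k ≤ n`, then `c ≤ ‖S k‖ + ‖S n‖`, so `S`
itself reaches `c / 2` at one of the times `k`, `n`. For independent centred steps `S` is a
martingale, `‖S‖ ^ 2` is a submartingale by conditional Jensen, and Doob's maximal inequality bounds
the probability of this event by `4 c⁻² E‖S n‖²`, which by orthogonality is `4 c⁻²` times the sum
of the second moments of the steps. Centring only decreases second moments, and `c = ε √a / 2`
gives the constant `16 ≤ 64`. -/

open ProbabilityTheory

section Martingale

variable {Ω E : Type*} {mΩ : MeasurableSpace Ω} {P : Measure Ω}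
  [NormedAddCommGroup E] [NormedSpace ℝ E] [CompleteSpace E]

lemma submartingale_norm_rpow_of_martingale {ι : Type*} [Preorder ι] {ℱ : Filtration ι mΩ}
    {M : ι → Ω → E} {p : ℝ} (hM : Martingale M ℱ P) (hp : 1 ≤ p)
    (hLp : ∀ i, Integrable (fun ω ↦ ‖M i ω‖ ^ p) P) :
    Submartingale (fun i ω ↦ ‖M i ω‖ ^ p) ℱ P := by
  refine ⟨fun i ↦ ?_, fun i j hij ↦ ?_, hLp⟩
  · exact ((hM.stronglyMeasurable i).norm.measurable.pow_const p).stronglyMeasurable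
  · filter_upwards [hM.condExp_ae_eq hij, Integrable.norm_condExp_rpow_le hp (hLp j)] with ω hω hle
    rwa [hω] at hle

lemma rpow_mul_measureReal_exists_le_norm_le_of_martingale [IsFiniteMeasure P] {𝒢 : Filtration ℕ mΩ}
    {M : ℕ → Ω → E} {p c : ℝ} (hM : Martingale M 𝒢 P) (hp : 1 ≤ p)
    (hLp : ∀ k, Integrable (fun ω ↦ ‖M k ω‖ ^ p) P) (hc : 0 ≤ c) (n : ℕ) :
    c ^ p * P.real {ω | ∃ k ≤ n, c ≤ ‖M k ω‖} ≤ ∫ ω, ‖M n ω‖ ^ p ∂P := by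
  have hnonneg : ∀ k ω, 0 ≤ ‖M k ω‖ ^ p := fun k ω ↦ by positivity
  have hdoob := maximal_ineq (submartingale_norm_rpow_of_martingale hM hp hLp) hnonneg
    (ε := (c ^ p).toNNReal) n
  have hevent : {ω | c ^ p ≤ (Finset.range (n + 1)).sup' Finset.nonempty_range_add_one
      fun k ↦ ‖M k ω‖ ^ p} = {ω | ∃ k ≤ n, c ≤ ‖M k ω‖} := by
    ext ω
    simp [Finset.le_sup'_iff, Real.rpow_le_rpow_iff hc (norm_nonneg _) (zero_lt_one.trans_le hp)]
  rw [Real.coe_toNNReal _ (by positivity), hevent] at hdoob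
  calc c ^ p * P.real {ω | ∃ k ≤ n, c ≤ ‖M k ω‖}
      ≤ ∫ ω in {ω | ∃ k ≤ n, c ≤ ‖M k ω‖}, ‖M n ω‖ ^ p ∂P := by
        have := ENNReal.toReal_mono ENNReal.ofReal_ne_top hdoob
        rwa [ENNReal.toReal_mul, ENNReal.toReal_ofReal (integral_nonneg (hnonneg n)),
          ENNReal.coe_toReal, Real.coe_toNNReal _ (by positivity)] at this
    _ ≤ ∫ ω, ‖M n ω‖ ^ p ∂P :=
        setIntegral_le_integral (hLp n) (ae_of_all _ (hnonneg n))

lemma martingale_sum_Icc_of_iIndepFun [MeasurableSpace E] [BorelSpace E] {Z : ℕ → Ω → E}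
    (hZ : ∀ j, StronglyMeasurable (Z j)) (hindep : iIndepFun Z P)
    (hL1 : ∀ j, Integrable (Z j) P) (hmean : ∀ j, P[Z j] = 0) :
    Martingale (fun k ω ↦ ∑ j ∈ Finset.Icc 1 k, Z j ω) (Filtration.natural Z hZ) P := by
  have := hindep.isProbabilityMeasure
  refine martingale_of_condExp_sub_eq_zero_nat (fun k ↦ ?_)
    (fun k ↦ integrable_finsetSum _ fun j _ ↦ hL1 j) fun k ↦ ?_
  · exact Finset.stronglyMeasurable_fun_sum _ fun j hj ↦
      ((Filtration.stronglyAdapted_natural hZ) j).mono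
        ((Filtration.natural Z hZ).mono (Finset.mem_Icc.1 hj).2)
  · have hincr : (fun ω ↦ ∑ j ∈ Finset.Icc 1 (k + 1), Z j ω) -
        (fun ω ↦ ∑ j ∈ Finset.Icc 1 k, Z j ω) = Z (k + 1) := by
      ext ω
      simp [Finset.sum_Icc_succ_top]
    have hZ_comap : StronglyMeasurable[.comap (Z (k + 1)) inferInstance] (Z (k + 1)) :=
      stronglyMeasurable_iff_measurable_separable.2
        ⟨comap_measurable _, (hZ (k + 1)).isSeparable_range⟩
    have hcond := condExp_indep_eq (hZ (k + 1)).measurable.comap_le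
      ((Filtration.natural Z hZ).le k) hZ_comap
      (hindep.indep_comap_natural_of_lt hZ (Nat.lt_succ_self k))
    rw [hmean] at hcond
    rwa [hincr]

end Martingale

section Hilbert

variable {Ω E : Type*} {mΩ : MeasurableSpace Ω} {P : Measure Ω}
  [NormedAddCommGroup E] [InnerProductSpace ℝ E] [CompleteSpace E]

lemma integral_norm_sub_integral_sq [IsProbabilityMeasure P] {Y : Ω → E} (hY : MemLp Y 2 P) :
    ∫ ω, ‖Y ω - P[Y]‖ ^ 2 ∂P = ∫ ω, ‖Y ω‖ ^ 2 ∂P - ‖P[Y]‖ ^ 2 := by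
  have hL1 : Integrable Y P := hY.integrable one_le_two
  have hsq : Integrable (fun ω ↦ ‖Y ω‖ ^ 2) P := hY.integrable_norm_pow two_ne_zero
  have hcross : Integrable (fun ω ↦ 2 * inner ℝ P[Y] (Y ω)) P :=
    (hL1.const_inner _).const_mul 2
  have hdiff : Integrable (fun ω ↦ ‖Y ω‖ ^ 2 - 2 * inner ℝ P[Y] (Y ω)) P := hsq.sub hcross
  calc ∫ ω, ‖Y ω - P[Y]‖ ^ 2 ∂P
      = ∫ ω, (‖Y ω‖ ^ 2 - 2 * inner ℝ P[Y] (Y ω) + ‖P[Y]‖ ^ 2) ∂P := by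
        simp only [norm_sub_sq_real, real_inner_comm]
    _ = ∫ ω, ‖Y ω‖ ^ 2 ∂P - 2 * ‖P[Y]‖ ^ 2 + ‖P[Y]‖ ^ 2 := by
        rw [integral_add hdiff (integrable_const _), integral_sub hsq hcross, integral_const_mul,
          integral_inner hL1, real_inner_self_eq_norm_sq, integral_const, probReal_univ, one_smul]
    _ = _ := by ring

variable [MeasurableSpace E] [BorelSpace E]

lemma integral_norm_sum_sq_of_pairwise_indepFun {ι : Type*} [IsFiniteMeasure P]
    {Z : ι → Ω → E} {s : Finset ι} (hL2 : ∀ i ∈ s, MemLp (Z i) 2 P)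
    (hindep : (s : Set ι).Pairwise fun i j ↦ Z i ⟂ᵢ[P] Z j) (hmean : ∀ i ∈ s, P[Z i] = 0) :
    ∫ ω, ‖∑ i ∈ s, Z i ω‖ ^ 2 ∂P = ∑ i ∈ s, ∫ ω, ‖Z i ω‖ ^ 2 ∂P := by
  have hL1 : ∀ i ∈ s, Integrable (Z i) P := fun i hi ↦ (hL2 i hi).integrable one_le_two
  have hinner : ∀ i ∈ s, ∀ j ∈ s, Integrable (fun ω ↦ inner ℝ (Z i ω) (Z j ω)) P := by
    intro i hi j hj
    obtain rfl | hij := eq_or_ne i j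
    · simpa only [real_inner_self_eq_norm_sq] using (hL2 i hi).integrable_norm_pow two_ne_zero
    · exact (hindep hi hj hij).integrable_bilin (hL1 i hi) (hL1 j hj) (innerSL ℝ)
  have horth : ∀ i ∈ s, ∀ j ∈ s, j ≠ i → ∫ ω, inner ℝ (Z i ω) (Z j ω) ∂P = 0 := by
    intro i hi j hj hji
    exact ((hindep hi hj hji.symm).integral_bilin (hL1 i hi) (hL1 j hj) (innerSL ℝ)).trans
      (by simp [hmean i hi])
  calc ∫ ω, ‖∑ i ∈ s, Z i ω‖ ^ 2 ∂P
      = ∫ ω, ∑ i ∈ s, ∑ j ∈ s, inner ℝ (Z i ω) (Z j ω) ∂P := by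
        simp_rw [← real_inner_self_eq_norm_sq, sum_inner, inner_sum]
    _ = ∑ i ∈ s, ∑ j ∈ s, ∫ ω, inner ℝ (Z i ω) (Z j ω) ∂P := by
        rw [integral_finsetSum _ fun i hi ↦ integrable_finsetSum _ (hinner i hi)]
        exact Finset.sum_congr rfl fun i hi ↦ integral_finsetSum _ (hinner i hi)
    _ = ∑ i ∈ s, ∫ ω, ‖Z i ω‖ ^ 2 ∂P := by
        refine Finset.sum_congr rfl fun i hi ↦ ?_
        rw [Finset.sum_eq_single_of_mem i hi (horth i hi)]
        simp only [real_inner_self_eq_norm_sq]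

lemma sq_mul_measureReal_exists_le_norm_sum_le_of_iIndepFun {Z : ℕ → Ω → E} {c : ℝ}
    (hZ : ∀ j, StronglyMeasurable (Z j)) (hindep : iIndepFun Z P) (hL2 : ∀ j, MemLp (Z j) 2 P)
    (hmean : ∀ j, P[Z j] = 0) (hc : 0 ≤ c) (n : ℕ) :
    c ^ 2 * P.real {ω | ∃ k ≤ n, c ≤ ‖∑ j ∈ Finset.Icc 1 k, Z j ω‖} ≤
      ∑ j ∈ Finset.Icc 1 n, ∫ ω, ‖Z j ω‖ ^ 2 ∂P := by
  have := hindep.isProbabilityMeasure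
  have hmart := martingale_sum_Icc_of_iIndepFun hZ hindep
    (fun j ↦ (hL2 j).integrable one_le_two) hmean
  have hsq : ∀ k, Integrable (fun ω ↦ ‖∑ j ∈ Finset.Icc 1 k, Z j ω‖ ^ (2 : ℝ)) P := fun k ↦ by
    simpa only [Real.rpow_two] using
      (memLp_finsetSum (Finset.Icc 1 k) fun j _ ↦ hL2 j).integrable_norm_pow two_ne_zero
  have hdoob := rpow_mul_measureReal_exists_le_norm_le_of_martingale hmart one_le_two hsq hc n
  simp only [Real.rpow_two] at hdoob
  exact hdoob.trans_eq <| integral_norm_sum_sq_of_pairwise_indepFun (fun j _ ↦ hL2 j)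
    (fun i _ j _ hij ↦ hindep.indepFun hij) fun j _ ↦ hmean j

end Hilbert

section Bridge

/-- The bridge at time `k ≤ n` of the walk with steps `z 1, …, z n`: the partial sum of the first
`k` steps minus the linear interpolation between `0` and the position at time `n`. -/
noncomputable def walkBridge {E : Type*} [AddCommGroup E] [Module ℝ E] (n : ℕ) (z : ℕ → E)
    (k : ℕ) : E :=
  ∑ j ∈ Finset.Icc 1 k, z j - ((k : ℝ) / n) • ∑ j ∈ Finset.Icc 1 n, z j

lemma exists_le_norm_sum_of_le_norm_walkBridge {E : Type*} [SeminormedAddCommGroup E]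
    [NormedSpace ℝ E] {z : ℕ → E} {c : ℝ} {k n : ℕ} (hk : k ≤ n) (h : c ≤ ‖walkBridge n z k‖) :
    ∃ m ≤ n, c / 2 ≤ ‖∑ j ∈ Finset.Icc 1 m, z j‖ := by
  let S : ℕ → E := fun m ↦ ∑ j ∈ Finset.Icc 1 m, z j
  have hweight : (k : ℝ) / n ≤ 1 := div_le_one_of_le₀ (mod_cast hk) n.cast_nonneg
  have hsum : c ≤ ‖S k‖ + ‖S n‖ := calc
    c ≤ ‖S k‖ + ‖((k : ℝ) / n) • S n‖ := h.trans (norm_sub_le _ _)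
    _ = ‖S k‖ + (k : ℝ) / n * ‖S n‖ := by rw [norm_smul_of_nonneg (by positivity)]
    _ ≤ ‖S k‖ + ‖S n‖ := by gcongr; exact mul_le_of_le_one_left (norm_nonneg _) hweight
  by_contra! hlt
  linarith [hlt k hk, hlt n le_rfl]

theorem measureReal_exists_le_norm_walkBridge_le {Ω E : Type*} {mΩ : MeasurableSpace Ω}
    {P : Measure Ω} [NormedAddCommGroup E] [InnerProductSpace ℝ E] [CompleteSpace E]
    [MeasurableSpace E] [BorelSpace E] {Y : ℕ → Ω → E} {c : ℝ}
    (hY : ∀ j, StronglyMeasurable (Y j)) (hindep : iIndepFun Y P) (hL2 : ∀ j, MemLp (Y j) 2 P)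
    (hc : 0 < c) (n : ℕ) :
    P.real {ω | ∃ k ∈ Finset.Icc 1 n, c ≤ ‖walkBridge n (fun j ↦ Y j ω - P[Y j]) k‖} ≤
      4 * (c ^ 2)⁻¹ * ∑ j ∈ Finset.Icc 1 n, ∫ ω, ‖Y j ω‖ ^ 2 ∂P := by
  have := hindep.isProbabilityMeasure
  set Z : ℕ → Ω → E := fun j ω ↦ Y j ω - P[Y j]
  have hZ_mean : ∀ j, P[Z j] = 0 := fun j ↦ by
    simp [Z, integral_sub ((hL2 j).integrable one_le_two) (integrable_const _)]
  have hZ_indep : iIndepFun Z P :=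
    hindep.comp (fun j y ↦ y - ∫ ω, Y j ω ∂P) fun _ ↦ (continuous_sub_right _).measurable
  have hkolmogorov := sq_mul_measureReal_exists_le_norm_sum_le_of_iIndepFun
    (fun j ↦ (hY j).sub stronglyMeasurable_const) hZ_indep
    (fun j ↦ (hL2 j).sub (memLp_const _)) hZ_mean (half_pos hc).le n
  calc P.real {ω | ∃ k ∈ Finset.Icc 1 n, c ≤ ‖walkBridge n (fun j ↦ Z j ω) k‖}
      ≤ P.real {ω | ∃ k ≤ n, c / 2 ≤ ‖∑ j ∈ Finset.Icc 1 k, Z j ω‖} :=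
        measureReal_mono fun ω ⟨k, hk, hle⟩ ↦
          exists_le_norm_sum_of_le_norm_walkBridge (Finset.mem_Icc.1 hk).2 hle
    _ ≤ ((c / 2) ^ 2)⁻¹ * ∑ j ∈ Finset.Icc 1 n, ∫ ω, ‖Z j ω‖ ^ 2 ∂P := by
        rwa [le_inv_mul_iff₀ (by positivity)]
    _ = 4 * (c ^ 2)⁻¹ * ∑ j ∈ Finset.Icc 1 n, ∫ ω, ‖Z j ω‖ ^ 2 ∂P := by
        rw [div_pow, inv_div]; ring
    _ ≤ 4 * (c ^ 2)⁻¹ * ∑ j ∈ Finset.Icc 1 n, ∫ ω, ‖Y j ω‖ ^ 2 ∂P := by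
        gcongr _ * ∑ j ∈ _, ?_ with j
        exact (integral_norm_sub_integral_sq (hL2 j)).trans_le (sub_le_self _ (sq_nonneg _))

end Bridge

section Truncation

variable {E : Type*} [SeminormedAddCommGroup E]

/-- The truncation `x 𝟙_{‖x‖² ≤ r}` of a vector, applied to the steps of a walk to make them
bounded. The threshold `r` is compared with the squared norm. -/
noncomputable def normSqTruncation (r : ℝ) (x : E) : E := if ‖x‖ ^ 2 ≤ r then x else 0

lemma norm_normSqTruncation_sq (r : ℝ) (x : E) :
    ‖normSqTruncation r x‖ ^ 2 = if ‖x‖ ^ 2 ≤ r then ‖x‖ ^ 2 else 0 := by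
  unfold normSqTruncation
  split_ifs <;> simp

lemma norm_normSqTruncation_le_sqrt (r : ℝ) (x : E) : ‖normSqTruncation r x‖ ≤ √r := by
  unfold normSqTruncation
  split_ifs with h
  · exact Real.le_sqrt_of_sq_le h
  · simp

lemma measurable_normSqTruncation [MeasurableSpace E] [OpensMeasurableSpace E] (r : ℝ) :
    Measurable (normSqTruncation r : E → E) :=
  .ite (measurableSet_le (by fun_prop) measurable_const) measurable_id measurable_const

lemma stronglyMeasurable_normSqTruncation_comp {Ω : Type*} [MeasurableSpace Ω] {X : Ω → E}
    (hX : StronglyMeasurable X) (r : ℝ) : StronglyMeasurable fun ω ↦ normSqTruncation r (X ω) :=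
  .ite (measurableSet_le (hX.norm.pow 2).measurable measurable_const) hX stronglyMeasurable_const

end Truncation

theorem truncated_bridge_maximal_inequality_general
    {Ω E : Type*} [MeasurableSpace Ω] (P : Measure Ω)
    [NormedAddCommGroup E] [InnerProductSpace ℝ E] [CompleteSpace E]
    [MeasurableSpace E] [BorelSpace E] (n : ℕ) (X : ℕ → Ω → E)
    (hmeas : ∀ j, StronglyMeasurable (X j)) (hindep : iIndepFun X P)
    (s a ε : ℝ) (ha : 0 < a) (hε : 0 < ε) :
    P.real {ω | ∃ k ∈ Finset.Icc 1 n, 2⁻¹ * ε * √a ≤ ‖walkBridge n (fun j ↦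
        normSqTruncation (s * a) (X j ω) - ∫ ω', normSqTruncation (s * a) (X j ω') ∂P) k‖}
      ≤ 16 * (ε ^ 2)⁻¹ * a⁻¹ *
        ∑ j ∈ Finset.Icc 1 n, ∫ ω, ‖normSqTruncation (s * a) (X j ω)‖ ^ 2 ∂P := by
  have := hindep.isProbabilityMeasure
  have hT_meas j := stronglyMeasurable_normSqTruncation_comp (hmeas j) (s * a)
  have hT_L2 : ∀ j, MemLp (fun ω ↦ normSqTruncation (s * a) (X j ω)) 2 P := fun j ↦
    .of_bound (hT_meas j).aestronglyMeasurable _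
      (ae_of_all _ fun ω ↦ norm_normSqTruncation_le_sqrt (s * a) (X j ω))
  have hT_indep := hindep.comp _ fun _ ↦ measurable_normSqTruncation (s * a)
  have hconst : 4 * ((2⁻¹ * ε * √a) ^ 2)⁻¹ = 16 * (ε ^ 2)⁻¹ * a⁻¹ := by
    rw [mul_pow, Real.sq_sqrt ha.le]
    ring
  rw [← hconst]
  exact measureReal_exists_le_norm_walkBridge_le hT_meas hT_indep hT_L2 (by positivity) n

/-- Doob-type bound for the bridge of the centred truncated random walk.
For i.i.d. random vectors `X_1, …, X_n` in `ℝ^d`, `s, a, ε > 0` and the truncations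
`Y_j = X_j 𝟙_{‖X_j‖² ≤ sa}`,
`P(max_{1≤k≤n} ‖Σ_{j≤k}(Y_j − EY_j) − (k/n)Σ_{j≤n}(Y_j − EY_j)‖ ≥ 2⁻¹ε√a)
  ≤ 64 ε⁻² a⁻¹ n E(‖X_1‖² 𝟙_{‖X_1‖² ≤ sa})`. -/
theorem truncated_bridge_maximal_inequality
    {Ω : Type*} [MeasurableSpace Ω] (P : Measure Ω) [IsProbabilityMeasure P]
    (d n : ℕ) (hn : 1 ≤ n)
    (X : ℕ → Ω → EuclideanSpace ℝ (Fin d))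
    (hmeas : ∀ i, Measurable (X i))
    (hindep : ProbabilityTheory.iIndepFun X P)
    (hident : ∀ i, Measure.map (X i) P = Measure.map (X 1) P)
    (s a ε : ℝ) (hs : 0 < s) (ha : 0 < a) (hε : 0 < ε) :
    (P {ω | 2⁻¹ * ε * Real.sqrt a ≤
        (Finset.Icc 1 n).sup' (Finset.nonempty_Icc.mpr hn) fun k =>
          ‖(∑ j ∈ Finset.Icc 1 k,
              ((if ‖X j ω‖ ^ 2 ≤ s * a then X j ω else 0)
                - ∫ ω', (if ‖X j ω'‖ ^ 2 ≤ s * a then X j ω' else 0) ∂P))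
            - ((k : ℝ) / (n : ℝ)) • (∑ j ∈ Finset.Icc 1 n,
              ((if ‖X j ω‖ ^ 2 ≤ s * a then X j ω else 0)
                - ∫ ω', (if ‖X j ω'‖ ^ 2 ≤ s * a then X j ω' else 0) ∂P))‖}).toReal
      ≤ 64 * (ε ^ 2)⁻¹ * a⁻¹ * n *
          ∫ ω, (if ‖X 1 ω‖ ^ 2 ≤ s * a then ‖X 1 ω‖ ^ 2 else 0) ∂P := by
  have hsecond_moment : ∀ j, ∫ ω, ‖normSqTruncation (s * a) (X j ω)‖ ^ 2 ∂P =
      ∫ ω, ‖normSqTruncation (s * a) (X 1 ω)‖ ^ 2 ∂P := fun j ↦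
    (IdentDistrib.mk (hmeas j).aemeasurable (hmeas 1).aemeasurable (hident j)).comp
      ((measurable_normSqTruncation (s * a)).norm.pow_const 2) |>.integral_eq
  have hbound := truncated_bridge_maximal_inequality_general P n X
    (fun j ↦ (hmeas j).stronglyMeasurable) hindep s a ε ha hε
  simp only [hsecond_moment, Finset.sum_const, Nat.card_Icc, Nat.add_sub_cancel, nsmul_eq_mul,
    ← mul_assoc] at hbound
  simp only [Finset.le_sup'_iff, ← norm_normSqTruncation_sq]
  refine hbound.trans ?_
  gcongr
  norm_num
end
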